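/- arXiv:1511.05321 — 2 statements merged into one kernel-verified Lean document; each statement's English description precedes it below -/
import Mathlib

section
/- Let p, q ∈ ℂ, let μ ∈ ℂ with Re μ > 0, and let n ≥ 0 be an integer. Then: (i) ∂μⁿθ[p,q](i/μ) = e^{2πipq} ∑_{j=0}^{n} C(j|2n) μ^{2n+1/2−j} ∂μ^{n−j}θ[−q,p](iμ); (ii) ∂μⁿ∂qθ[p,q](i/μ) = e^{2πipq} ∑_{j=0}^{n} C(j|2n+1) μ^{2n+3/2−j} ∂μ^{n−j}∂qθ[−q,p](iμ), where ∂qθ[−q,p] denotes the characteristic-derivative series taken at the pair of characteristics (−q, p). -/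
noncomputable section

/-- The theta function with characteristics `θ[p,q](iμ)`. -/
def theta (p q μ : ℂ) : ℂ :=
  ∑' m : ℤ, Complex.exp (-(Real.pi : ℂ) * ((m : ℂ) + p) ^ 2 * μ +
    2 * (Real.pi : ℂ) * Complex.I * ((m : ℂ) + p) * q)

/-- The characteristic derivative `∂qθ[p,q](iμ)`. -/
def thetaQ (p q μ : ℂ) : ℂ :=
  2 * (Real.pi : ℂ) * Complex.I *
    ∑' m : ℤ, ((m : ℂ) + p) * Complex.exp (-(Real.pi : ℂ) * ((m : ℂ) + p) ^ 2 * μ +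
      2 * (Real.pi : ℂ) * Complex.I * ((m : ℂ) + p) * q)

/-- The n-th μ-derivative `∂μⁿθ[p,q](iμ)`, given by its absolutely convergent series. -/
def thetaD (n : ℕ) (p q μ : ℂ) : ℂ :=
  (-(Real.pi : ℂ)) ^ n *
    ∑' m : ℤ, ((m : ℂ) + p) ^ (2 * n) *
      Complex.exp (-(Real.pi : ℂ) * ((m : ℂ) + p) ^ 2 * μ +
        2 * (Real.pi : ℂ) * Complex.I * ((m : ℂ) + p) * q)

/-- The n-th μ-derivative `∂μⁿ∂qθ[p,q](iμ)`, given by its absolutely convergent series. -/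
def thetaQD (n : ℕ) (p q μ : ℂ) : ℂ :=
  2 * Complex.I * (-1 : ℂ) ^ n * (Real.pi : ℂ) ^ (n + 1) *
    ∑' m : ℤ, ((m : ℂ) + p) ^ (2 * n + 1) *
      Complex.exp (-(Real.pi : ℂ) * ((m : ℂ) + p) ^ 2 * μ +
        2 * (Real.pi : ℂ) * Complex.I * ((m : ℂ) + p) * q)

/-- The constant `C(j|n) = (−i)ⁿ n! / (2ʲ (n−2j)! (2j)!!)` with `(2j)!! = 2ʲ j!`. -/
def Ccoef (j n : ℕ) : ℂ :=
  (-Complex.I) ^ n * (n.factorial : ℂ) /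
    ((2 : ℂ) ^ j * ((n - 2 * j).factorial : ℂ) * ((2 : ℂ) ^ j * (j.factorial : ℂ)))

/-- `w₁[p,q](iμ)` of the two-parametric family. -/
def w1 (p q μ : ℂ) : ℂ :=
  -(Complex.I / 2) * theta 0 0 μ * theta 0 (1 / 2) μ * thetaQ p (q + 1 / 2) μ /
    (Complex.exp ((Real.pi : ℂ) * Complex.I * p) * theta p q μ)

/-- `w₂[p,q](iμ)` of the two-parametric family. -/
def w2 (p q μ : ℂ) : ℂ :=
  (Complex.I / 2) * theta (1 / 2) 0 μ * theta 0 (1 / 2) μ *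
    thetaQ (p + 1 / 2) (q + 1 / 2) μ /
    (Complex.exp ((Real.pi : ℂ) * Complex.I * p) * theta p q μ)

/-- `w₃[p,q](iμ)` of the two-parametric family. -/
def w3 (p q μ : ℂ) : ℂ :=
  -(1 / 2 : ℂ) * theta (1 / 2) 0 μ * theta 0 0 μ * thetaQ (p + 1 / 2) q μ / theta p q μ

/-- The conformal factor `F[p,q](iμ)` of the two-parametric family. -/
def Ftwo (Λ p q μ : ℂ) : ℂ :=
  (2 / ((Real.pi : ℂ) * Λ)) * (theta p q μ / thetaQ p q μ) ^ 2

/-- `w₁[q₀](iμ)` of the one-parametric family. -/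
def v1 (q0 μ : ℂ) : ℂ := 1 / (μ + q0) + 2 * thetaD 1 (1 / 2) 0 μ / theta (1 / 2) 0 μ

/-- `w₂[q₀](iμ)` of the one-parametric family. -/
def v2 (q0 μ : ℂ) : ℂ := 1 / (μ + q0) + 2 * thetaD 1 0 0 μ / theta 0 0 μ

/-- `w₃[q₀](iμ)` of the one-parametric family. -/
def v3 (q0 μ : ℂ) : ℂ := 1 / (μ + q0) + 2 * thetaD 1 0 (1 / 2) μ / theta 0 (1 / 2) μ

/-- The conformal factor `F[q₀](iμ) = C(μ+q₀)²` of the one-parametric family. -/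
def Fone (C q0 μ : ℂ) : ℂ := C * (μ + q0) ^ 2

/-- The Seeley–de Witt coefficient `ã₀[p,q](iμ)` of the two-parametric family. -/
def a0two (Λ p q μ : ℂ) : ℂ :=
  4 * Ftwo Λ p q μ ^ 2 * w1 p q μ * w2 p q μ * w3 p q μ

/-- The Seeley–de Witt coefficient `ã₀[q₀](iμ)` of the one-parametric family. -/
def a0one (C q0 μ : ℂ) : ℂ :=
  4 * Fone C q0 μ ^ 2 * v1 q0 μ * v2 q0 μ * v3 q0 μ

/-- The Seeley–de Witt coefficient `ã₂[p,q](iμ)` of the two-parametric family. -/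
def a2two (Λ p q μ : ℂ) : ℂ :=
  -(Ftwo Λ p q μ / 3) * (w1 p q μ ^ 2 + w2 p q μ ^ 2 + w3 p q μ ^ 2) +
  (Ftwo Λ p q μ / 6) *
    ((w1 p q μ ^ 2 * w2 p q μ ^ 2 - deriv (w3 p q) μ ^ 2) / w3 p q μ ^ 2 +
     (w1 p q μ ^ 2 * w3 p q μ ^ 2 - deriv (w2 p q) μ ^ 2) / w2 p q μ ^ 2 +
     (w2 p q μ ^ 2 * w3 p q μ ^ 2 - deriv (w1 p q) μ ^ 2) / w1 p q μ ^ 2) -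
  (Ftwo Λ p q μ / 3) *
    (deriv (w1 p q) μ * deriv (w2 p q) μ / (w1 p q μ * w2 p q μ) +
     deriv (w1 p q) μ * deriv (w3 p q) μ / (w1 p q μ * w3 p q μ) +
     deriv (w2 p q) μ * deriv (w3 p q) μ / (w2 p q μ * w3 p q μ)) +
  (Ftwo Λ p q μ / 3) *
    (iteratedDeriv 2 (w1 p q) μ / w1 p q μ + iteratedDeriv 2 (w2 p q) μ / w2 p q μ +
     iteratedDeriv 2 (w3 p q) μ / w3 p q μ) -
  deriv (Ftwo Λ p q) μ ^ 2 / (2 * Ftwo Λ p q μ) + iteratedDeriv 2 (Ftwo Λ p q) μ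


/-!
The transformation law of Jacobi's theta function reads
`θ[p,q](i/μ) = e^{2πipq} μ^{1/2} θ[−q,p](iμ)`. Shift `q` by `t`. On the left, `t ↦ θ[p,q+t](i/μ)`
is the exponential generating function of the moments `∑ (m+p)ᵏ exp(⋯)`. On the right, completing
the square turns the shift of the first characteristic into a shift of the second one by `−iμt`, at
the price of a Gaussian factor `e^{−πμt²}`, so the right-hand side is `e^{−πμt²}` times a generating
function of the same kind. Comparing the coefficients of `t^N` expresses the `N`-th moment at `1/μ`
through those at `μ`; even and odd `N` give the two formulas.
-/

section PowerSeries

open Finset Filter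
open scoped Nat Topology

theorem eq_of_eventually_hasSum_mul_pow {𝕜 : Type*} [NontriviallyNormedField 𝕜] {a b : ℕ → 𝕜}
    {f : 𝕜 → 𝕜} (ha : ∀ᶠ t in 𝓝 0, HasSum (fun n => a n * t ^ n) (f t))
    (hb : ∀ᶠ t in 𝓝 0, HasSum (fun n => b n * t ^ n) (f t)) : a = b := by
  have hasFPowerSeriesAt {c : ℕ → 𝕜} (hc : ∀ᶠ t in 𝓝 0, HasSum (fun n => c n * t ^ n) (f t)) :
      HasFPowerSeriesAt f (FormalMultilinearSeries.ofScalars 𝕜 c) 0 := by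
    rw [hasFPowerSeriesAt_iff]
    simpa only [FormalMultilinearSeries.coeff_ofScalars, smul_eq_mul, mul_comm, zero_add] using hc
  exact FormalMultilinearSeries.ofScalars_series_injective 𝕜 𝕜
    ((hasFPowerSeriesAt ha).eq_formalMultilinearSeries (hasFPowerSeriesAt hb))

theorem hasSum_tsum_mul_pow_div_factorial {ι : Type*} {w x : ι → ℂ} {t : ℂ}
    (h : Summable fun m => ‖w m‖ * Real.exp ‖x m * t‖) :
    HasSum (fun k : ℕ => (∑' m, w m * x m ^ k) / k ! * t ^ k)
      (∑' m, w m * Complex.exp (x m * t)) := by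
  let f : ι × ℕ → ℂ := fun mk => w mk.1 * ((x mk.1 * t) ^ mk.2 / mk.2 !)
  have norm_row (m : ι) : HasSum (fun k => ‖f (m, k)‖) (‖w m‖ * Real.exp ‖x m * t‖) := by
    have := (NormedSpace.expSeries_div_hasSum_exp ‖x m * t‖).mul_left ‖w m‖
    simpa only [f, norm_mul, norm_div, norm_pow, Complex.norm_natCast, Real.exp_eq_exp_ℝ] using this
  have row (m : ι) : HasSum (fun k => f (m, k)) (w m * Complex.exp (x m * t)) := by
    have := (NormedSpace.expSeries_div_hasSum_exp (x m * t)).mul_left (w m)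
    rwa [← Complex.exp_eq_exp_ℂ] at this
  have summable_f : Summable f := by
    refine Summable.of_norm ((summable_prod_of_nonneg fun _ => norm_nonneg _).2
      ⟨fun m => (norm_row m).summable, ?_⟩)
    simpa only [(norm_row _).tsum_eq] using h
  have total : HasSum f (∑' m, w m * Complex.exp (x m * t)) :=
    (summable_f.hasSum.prod_fiberwise row).tsum_eq ▸ summable_f.hasSum
  have column (k : ℕ) : HasSum (fun m => f (m, k)) ((∑' m, w m * x m ^ k) / k ! * t ^ k) := by
    have column_sum : ∑' m, f (m, k) = (∑' m, w m * x m ^ k) / k ! * t ^ k := by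
      rw [div_mul_eq_mul_div, mul_div_assoc, ← tsum_mul_right]
      refine tsum_congr fun m => ?_
      simp only [f, mul_pow]
      ring
    exact column_sum ▸ (summable_f.prod_symm.prod_factor k).hasSum
  exact ((Equiv.prodComm ℕ ι).hasSum_iff.2 total).prod_fiberwise column

theorem hasSum_sum_range_div_two_of_hasSum_prod {E : Type*} [AddCommMonoid E] [TopologicalSpace E]
    [ContinuousAdd E] [RegularSpace E] {f : ℕ × ℕ → E} {s : E} (h : HasSum f s) :
    HasSum (fun N => ∑ j ∈ range (N / 2 + 1), f (j, N - 2 * j)) s := by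
  have fiber (N : ℕ) : (fun jk : ℕ × ℕ => 2 * jk.1 + jk.2) ⁻¹' {N} =
      (range (N / 2 + 1)).image fun j => (j, N - 2 * j) := by
    ext ⟨j, k⟩
    simp only [Set.mem_preimage, Set.mem_singleton_iff, coe_image, coe_range, Set.mem_image,
      Set.mem_Iio, Prod.mk.injEq, existsAndEq, true_and]
    omega
  have hasSum_fiber (N : ℕ) :
      HasSum (fun jk : (fun jk : ℕ × ℕ => 2 * jk.1 + jk.2) ⁻¹' {N} => f jk)
        (∑ j ∈ range (N / 2 + 1), f (j, N - 2 * j)) := by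
    rw [fiber, ← sum_image (f := f) fun _ _ _ _ hij => congrArg Prod.fst hij]
    exact Finset.hasSum _ f
  exact ((Equiv.sigmaFiberEquiv fun jk : ℕ × ℕ => 2 * jk.1 + jk.2).hasSum_iff.2 h).sigma
    hasSum_fiber

theorem hasSum_mul_pow_of_hasSum_sq_pow {R : Type*} [NormedCommRing R] [CompleteSpace R]
    {a b : ℕ → R} {t r s : R} (ha : HasSum (fun j => a j * (t ^ 2) ^ j) r)
    (hb : HasSum (fun k => b k * t ^ k) s) (ha_norm : Summable fun j => ‖a j * (t ^ 2) ^ j‖)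
    (hb_norm : Summable fun k => ‖b k * t ^ k‖) :
    HasSum (fun N => (∑ j ∈ range (N / 2 + 1), a j * b (N - 2 * j)) * t ^ N) (r * s) := by
  have coeff (N : ℕ) : (∑ j ∈ range (N / 2 + 1), a j * b (N - 2 * j)) * t ^ N =
      ∑ j ∈ range (N / 2 + 1), a j * (t ^ 2) ^ j * (b (N - 2 * j) * t ^ (N - 2 * j)) := by
    rw [sum_mul]
    refine sum_congr rfl fun j hj => ?_
    have hN : N = 2 * j + (N - 2 * j) := by
      have := mem_range.1 hj
      omega
    calc a j * b (N - 2 * j) * t ^ N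
        = a j * b (N - 2 * j) * t ^ (2 * j + (N - 2 * j)) := by rw [← hN]
      _ = a j * (t ^ 2) ^ j * (b (N - 2 * j) * t ^ (N - 2 * j)) := by ring
  have hprod := summable_mul_of_summable_norm ha_norm hb_norm
  simpa only [coeff] using hasSum_sum_range_div_two_of_hasSum_prod (ha.mul hb hprod)

theorem hasSum_exp_mul_sq_mul {b : ℕ → ℂ} {t s : ℂ} (c : ℂ)
    (hb : HasSum (fun k => b k * t ^ k) s) :
    HasSum (fun N => (∑ j ∈ range (N / 2 + 1), c ^ j / j ! * b (N - 2 * j)) * t ^ N)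
      (Complex.exp (c * t ^ 2) * s) := by
  have hexp : HasSum (fun j : ℕ => c ^ j / j ! * (t ^ 2) ^ j) (Complex.exp (c * t ^ 2)) := by
    simp only [div_mul_eq_mul_div, ← mul_pow, Complex.exp_eq_exp_ℂ]
    exact NormedSpace.expSeries_div_hasSum_exp (c * t ^ 2)
  exact hasSum_mul_pow_of_hasSum_sq_pow (a := fun j : ℕ => c ^ j / j !) hexp hb
    hexp.summable.norm hb.summable.norm

end PowerSeries

section Theta

open Complex Finset
open scoped Nat

/-- The `k`-th moment of the theta series with characteristics: each term is weighted by `(m+p)ᵏ`.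
Up to constants, the even moments are the functions `∂μⁿθ` and the odd ones `∂μⁿ∂qθ`. -/
def thetaMoment (k : ℕ) (p q μ : ℂ) : ℂ :=
  ∑' m : ℤ, ((m : ℂ) + p) ^ k * cexp (-(Real.pi : ℂ) * ((m : ℂ) + p) ^ 2 * μ +
    2 * (Real.pi : ℂ) * I * ((m : ℂ) + p) * q)

theorem thetaD_eq_thetaMoment (n : ℕ) (p q μ : ℂ) :
    thetaD n p q μ = (-(Real.pi : ℂ)) ^ n * thetaMoment (2 * n) p q μ :=
  rfl

theorem thetaQD_eq_thetaMoment (n : ℕ) (p q μ : ℂ) :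
    thetaQD n p q μ =
      2 * Real.pi * I * ((-(Real.pi : ℂ)) ^ n * thetaMoment (2 * n + 1) p q μ) := by
  rw [thetaQD, ← thetaMoment, neg_pow (Real.pi : ℂ)]
  ring

theorem theta_eq_jacobiTheta₂ (p q μ : ℂ) :
    theta p q μ = cexp (-Real.pi * p ^ 2 * μ + 2 * Real.pi * I * p * q) *
      jacobiTheta₂ (q + I * p * μ) (I * μ) := by
  rw [theta, jacobiTheta₂, ← tsum_mul_left]
  refine tsum_congr fun m => ?_
  rw [jacobiTheta₂_term, ← Complex.exp_add]
  congr 1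
  linear_combination (-2 * m * p - m ^ 2) * Real.pi * μ * I_sq

theorem theta_one_div {μ : ℂ} (hμ : μ ≠ 0) (p q : ℂ) :
    theta p q (1 / μ) =
      cexp (2 * Real.pi * I * p * q) * μ ^ (1 / 2 : ℂ) * theta (-q) p μ := by
  have sqrt_ne_zero : μ ^ (1 / 2 : ℂ) ≠ 0 := by simp [cpow_eq_zero_iff, hμ]
  have arg_div : (p + I * -q * μ) / (I * μ) = -(q + I * p * (1 / μ)) := by
    field_simp
    linear_combination p * I_sq
  have neg_one_div : -1 / (I * μ) = I * (1 / μ) := by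
    field_simp
    linear_combination -I_sq
  have neg_I_mul : -I * (I * μ) = μ := by linear_combination -μ * I_sq
  have exponents : -Real.pi * p ^ 2 * (1 / μ) + 2 * Real.pi * I * p * q =
      2 * Real.pi * I * p * q + ((-Real.pi * (-q) ^ 2 * μ + 2 * Real.pi * I * -q * p) +
        -Real.pi * I * (p + I * -q * μ) ^ 2 / (I * μ)) := by
    field_simp
    linear_combination q ^ 2 * μ ^ 2 * I_sq
  rw [theta_eq_jacobiTheta₂, theta_eq_jacobiTheta₂ (-q), jacobiTheta₂_functional_equation (p + _),
    arg_div, neg_one_div, neg_I_mul, jacobiTheta₂_neg_left, exponents, exp_add, exp_add]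
  field_simp

theorem theta_add_left (p q μ s : ℂ) :
    theta (p + s) q μ =
      cexp (-Real.pi * μ * s ^ 2 + 2 * Real.pi * I * s * q) * theta p (q + I * μ * s) μ := by
  rw [theta, theta, ← tsum_mul_left]
  refine tsum_congr fun m => ?_
  rw [← Complex.exp_add]
  congr 1
  linear_combination -2 * Real.pi * (m + p) * μ * s * I_sq

theorem theta_add_right_one_div {μ : ℂ} (hμ : μ ≠ 0) (p q t : ℂ) :
    theta p (q + t) (1 / μ) = cexp (2 * Real.pi * I * p * q) * μ ^ (1 / 2 : ℂ) *
      (cexp (-Real.pi * μ * t ^ 2) * theta (-q) (p + -I * μ * t) μ) := by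
  have shift_exponents : cexp (2 * Real.pi * I * p * (q + t)) *
      cexp (-Real.pi * μ * (-t) ^ 2 + 2 * Real.pi * I * -t * p) =
        cexp (2 * Real.pi * I * p * q) * cexp (-Real.pi * μ * t ^ 2) := by
    rw [← Complex.exp_add, ← Complex.exp_add]
    ring_nf
  have shift : p + I * μ * -t = p + -I * μ * t := by ring
  rw [theta_one_div hμ, neg_add, theta_add_left, shift]
  linear_combination μ ^ (1 / 2 : ℂ) * theta (-q) (p + -I * μ * t) μ * shift_exponents

theorem re_neg_pi_mul_sq_mul_add_linear_le (μ b d : ℂ) (m : ℤ) :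
    (-(Real.pi : ℂ) * m ^ 2 * μ + (m * b + d)).re ≤
      -Real.pi * m ^ 2 * μ.re + |(m : ℝ)| * ‖b‖ + ‖d‖ := by
  have quadratic : -(Real.pi : ℂ) * m ^ 2 * μ = ((-Real.pi * m ^ 2 : ℝ) : ℂ) * μ := by
    push_cast
    ring
  have linear_le : (m * b + d).re ≤ |(m : ℝ)| * ‖b‖ + ‖d‖ :=
    (re_le_norm _).trans ((norm_add_le _ _).trans_eq (by rw [norm_mul, norm_intCast]))
  rw [add_re, quadratic, re_ofReal_mul]
  linarith

theorem summable_norm_theta_term_mul_exp {μ : ℂ} (hμ : 0 < μ.re) (p q t : ℂ) :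
    Summable fun m : ℤ => ‖cexp (-(Real.pi : ℂ) * ((m : ℂ) + p) ^ 2 * μ +
      2 * (Real.pi : ℂ) * I * ((m : ℂ) + p) * q)‖ *
        Real.exp ‖2 * (Real.pi : ℂ) * I * ((m : ℂ) + p) * t‖ := by
  let b : ℂ := -2 * Real.pi * p * μ + 2 * Real.pi * I * q
  let d : ℂ := -Real.pi * p ^ 2 * μ + 2 * Real.pi * I * p * q
  have exponent (m : ℤ) : -(Real.pi : ℂ) * ((m : ℂ) + p) ^ 2 * μ +
      2 * (Real.pi : ℂ) * I * ((m : ℂ) + p) * q =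
        -(Real.pi : ℂ) * m ^ 2 * μ + (m * b + d) := by
    ring
  have norm_le (m : ℤ) : ‖2 * (Real.pi : ℂ) * I * ((m : ℂ) + p) * t‖ ≤
      2 * Real.pi * (|(m : ℝ)| + ‖p‖) * ‖t‖ := by
    have norm_two_pi_I : ‖2 * (Real.pi : ℂ) * I‖ = 2 * Real.pi := by
      simp [abs_of_pos Real.pi_pos]
    rw [norm_mul, norm_mul, norm_two_pi_I, ← norm_intCast]
    gcongr
    exact norm_add_le _ _
  refine .of_nonneg_of_le (fun m => by positivity) (fun m => ?_)
    ((summable_pow_mul_jacobiTheta₂_term_bound (‖b‖ / (2 * Real.pi) + ‖t‖) hμ 0).mul_left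
      (Real.exp (‖d‖ + 2 * Real.pi * ‖p‖ * ‖t‖)))
  rw [exponent, norm_exp, ← Real.exp_add, pow_zero, one_mul, ← Real.exp_add]
  refine Real.exp_le_exp.2
    ((add_le_add (re_neg_pi_mul_sq_mul_add_linear_le μ b d m) (norm_le m)).trans_eq ?_)
  push_cast
  field_simp
  ring

theorem hasSum_thetaMoment {μ : ℂ} (hμ : 0 < μ.re) (p q t : ℂ) :
    HasSum (fun k : ℕ => (2 * Real.pi * I) ^ k * thetaMoment k p q μ / k ! * t ^ k)
      (theta p (q + t) μ) := by
  convert hasSum_tsum_mul_pow_div_factorial (summable_norm_theta_term_mul_exp hμ p q t) using 1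
  · funext k
    rw [thetaMoment, ← tsum_mul_left]
    congr 2
    refine tsum_congr fun m => ?_
    rw [mul_pow _ ((m : ℂ) + p)]
    ring
  · refine tsum_congr fun m => ?_
    rw [← Complex.exp_add]
    ring_nf

theorem thetaMoment_one_div_div_factorial {μ : ℂ} (hμ : 0 < μ.re) (N : ℕ) (p q : ℂ) :
    (2 * Real.pi * I) ^ N * thetaMoment N p q (1 / μ) / N ! =
      cexp (2 * Real.pi * I * p * q) * μ ^ (1 / 2 : ℂ) *
        ∑ j ∈ range (N / 2 + 1), (-Real.pi * μ) ^ j / j ! *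
          ((2 * Real.pi * μ) ^ (N - 2 * j) * thetaMoment (N - 2 * j) (-q) p μ /
            (N - 2 * j)!) := by
  have hμ₀ : μ ≠ 0 := ne_zero_of_re_pos hμ
  have hμ' : 0 < (1 / μ).re := by
    rw [one_div, inv_re]
    exact div_pos hμ (normSq_pos.2 hμ₀)
  have hdual (t : ℂ) : HasSum
      (fun k : ℕ => (2 * Real.pi * μ) ^ k * thetaMoment k (-q) p μ / k ! * t ^ k)
      (theta (-q) (p + -I * μ * t) μ) := by
    convert hasSum_thetaMoment hμ (-q) p (-I * μ * t) using 2 with k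
    have scale : 2 * Real.pi * I * (-I * μ) = 2 * Real.pi * μ := by
      linear_combination -2 * Real.pi * μ * I_sq
    rw [← scale, mul_pow _ (-I * μ), mul_pow _ t]
    ring
  have hprod (t : ℂ) := (hasSum_exp_mul_sq_mul (-Real.pi * μ) (hdual t)).mul_left
    (cexp (2 * Real.pi * I * p * q) * μ ^ (1 / 2 : ℂ))
  simp only [← theta_add_right_one_div hμ₀, ← mul_assoc _ _ (_ ^ _)] at hprod
  exact congrFun (eq_of_eventually_hasSum_mul_pow
    (.of_forall (hasSum_thetaMoment hμ' p q)) (.of_forall hprod)) N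

theorem two_pi_I_pow_mul_Ccoef_mul_cpow {μ : ℂ} (hμ : μ ≠ 0) {j N : ℕ} (hj : 2 * j ≤ N) :
    (2 * Real.pi * I) ^ N * (Ccoef j N * μ ^ ((N : ℂ) + 1 / 2 - j)) =
      N ! * μ ^ (1 / 2 : ℂ) * (-Real.pi) ^ j * ((-Real.pi * μ) ^ j / j ! *
        ((2 * Real.pi * μ) ^ (N - 2 * j) / (N - 2 * j)!)) := by
  obtain ⟨r, rfl⟩ := Nat.exists_eq_add_of_le hj
  have cpow_eq : μ ^ (((2 * j + r : ℕ) : ℂ) + 1 / 2 - j) = μ ^ (1 / 2 : ℂ) * μ ^ (j + r) := by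
    rw [← cpow_natCast, ← cpow_add _ _ hμ]
    congr 1
    push_cast
    ring
  have I_pow : (2 * Real.pi * I) ^ (2 * j + r) * (-I) ^ (2 * j + r) =
      (2 * Real.pi) ^ (2 * j + r) := by
    rw [← mul_pow]
    congr 1
    linear_combination -2 * Real.pi * I_sq
  have neg_pow_mul : (-Real.pi : ℂ) ^ j * (-(Real.pi * μ)) ^ j = Real.pi ^ (2 * j) * μ ^ j := by
    rw [pow_mul, ← mul_pow, ← mul_pow]
    ring
  have hj₀ : (j ! : ℂ) ≠ 0 := Nat.cast_ne_zero.2 j.factorial_ne_zero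
  have hr₀ : (r ! : ℂ) ≠ 0 := Nat.cast_ne_zero.2 r.factorial_ne_zero
  rw [Ccoef, cpow_eq, Nat.add_sub_cancel_left]
  field_simp
  rw [I_pow]
  linear_combination -(2 * j + r)! * (2 ^ j) ^ 2 * μ ^ (1 / 2 : ℂ) * (2 * Real.pi * μ) ^ r *
    neg_pow_mul

theorem neg_pi_pow_mul_thetaMoment_one_div {μ : ℂ} (hμ : 0 < μ.re) (N : ℕ) (p q : ℂ) :
    (-(Real.pi : ℂ)) ^ (N / 2) * thetaMoment N p q (1 / μ) =
      cexp (2 * Real.pi * I * p * q) * ∑ j ∈ range (N / 2 + 1),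
        Ccoef j N * μ ^ ((N : ℂ) + 1 / 2 - j) *
          ((-(Real.pi : ℂ)) ^ (N / 2 - j) * thetaMoment (N - 2 * j) (-q) p μ) := by
  have two_pi_I_pow_ne_zero : (2 * Real.pi * I) ^ N ≠ 0 := pow_ne_zero _ two_pi_I_ne_zero
  have hN : (N ! : ℂ) ≠ 0 := Nat.cast_ne_zero.2 N.factorial_ne_zero
  have key := thetaMoment_one_div_div_factorial hμ N p q
  rw [div_eq_iff hN] at key
  refine mul_left_cancel₀ two_pi_I_pow_ne_zero ?_
  rw [mul_left_comm, key]
  simp only [mul_sum, sum_mul]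
  refine sum_congr rfl fun j hj => ?_
  have hjN : j ≤ N / 2 := Nat.lt_succ_iff.1 (mem_range.1 hj)
  have coef := two_pi_I_pow_mul_Ccoef_mul_cpow (ne_zero_of_re_pos hμ)
    (show 2 * j ≤ N by omega)
  have split : (-(Real.pi : ℂ)) ^ (N / 2) = (-Real.pi) ^ j * (-Real.pi) ^ (N / 2 - j) := by
    rw [← pow_add, Nat.add_sub_cancel' hjN]
  rw [split]
  linear_combination -cexp (2 * Real.pi * I * p * q) * (-(Real.pi : ℂ)) ^ (N / 2 - j) *
    thetaMoment (N - 2 * j) (-q) p μ * coef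

end Theta

/-- Lemma 5.3 (inversion part): behavior of `∂μⁿθ[p,q]` and `∂μⁿ∂qθ[p,q]` under
`iμ ↦ i/μ`, i.e. `μ ↦ 1/μ`. -/
theorem statement3 (p q μ : ℂ) (hμ : 0 < μ.re) (n : ℕ) :
    thetaD n p q (1 / μ) =
        Complex.exp (2 * (Real.pi : ℂ) * Complex.I * p * q) *
          ∑ j ∈ Finset.range (n + 1),
            Ccoef j (2 * n) * μ ^ (2 * (n : ℂ) + 1 / 2 - (j : ℂ)) *
              thetaD (n - j) (-q) p μ ∧
    thetaQD n p q (1 / μ) =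
        Complex.exp (2 * (Real.pi : ℂ) * Complex.I * p * q) *
          ∑ j ∈ Finset.range (n + 1),
            Ccoef j (2 * n + 1) * μ ^ (2 * (n : ℂ) + 3 / 2 - (j : ℂ)) *
              thetaQD (n - j) (-q) p μ := by
  constructor
  · have h := neg_pi_pow_mul_thetaMoment_one_div hμ (2 * n) p q
    rw [Nat.mul_div_cancel_left n two_pos] at h
    simpa only [thetaD_eq_thetaMoment, Nat.mul_sub, Nat.cast_mul, Nat.cast_ofNat] using h
  · have h := neg_pi_pow_mul_thetaMoment_one_div hμ (2 * n + 1) p q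
    rw [show (2 * n + 1) / 2 = n by omega] at h
    rw [thetaQD_eq_thetaMoment, h, mul_left_comm, Finset.mul_sum]
    congr 1
    refine Finset.sum_congr rfl fun j hj => ?_
    have degree : 2 * n + 1 - 2 * j = 2 * (n - j) + 1 := by
      have := Finset.mem_range.1 hj
      omega
    have exponent : ((2 * n + 1 : ℕ) : ℂ) + 1 / 2 - j = 2 * n + 3 / 2 - j := by
      push_cast
      ring
    rw [thetaQD_eq_thetaMoment, degree, exponent, mul_left_comm]

end
end

section
/- Let p, q ∈ ℂ and μ ∈ ℂ with Re μ > 0, and assume θ[p,q](iν) ≠ 0 for every ν with Re ν > 0. Then: w₂[p,q](i/μ) = μ² w₂[−q,p](iμ); w₂'[p,q](i/μ) = −μ⁴ w₂'[−q,p](iμ) − 2μ³ w₂[−q,p](iμ); w₂''[p,q](i/μ) = μ⁶ w₂''[−q,p](iμ) + 6μ⁵ w₂'[−q,p](iμ) + 6μ⁴ w₂[−q,p](iμ); w₂⁽³⁾[p,q](i/μ) = −μ⁸ w₂⁽³⁾[−q,p](iμ) − 12μ⁷ w₂''[−q,p](iμ) − 36μ⁶ w₂'[−q,p](iμ) − 24μ⁵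 w₂[−q,p](iμ); w₂⁽⁴⁾[p,q](i/μ) = μ¹⁰ w₂⁽⁴⁾[−q,p](iμ) + 20μ⁹ w₂⁽³⁾[−q,p](iμ) + 120μ⁸ w₂''[−q,p](iμ) + 240μ⁷ w₂'[−q,p](iμ) + 120μ⁶ w₂[−q,p](iμ). -/
noncomputable section

/-!
Each of `θ₂`, `θ₄`, `θ[p,q]` is carried by `μ ↦ 1 / μ` to a theta function with a factor of weight
`1 / 2`, and `∂qθ[p + 1/2, q + 1/2]` to one of weight `3 / 2`, by Jacobi's functional equations; the
prefactors therefore combine to weight `1 / 2 + 1 / 2 + 3 / 2 - 1 / 2 = 2`, and the remaining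
phases cancel. The derivatives follow from a closed formula for the `n`-th derivative of
`y ↦ y⁻¹ ^ m • g y⁻¹`, whose coefficients are generalised Lah numbers.
-/

section LahNumbers

/-- The generalised Lah number `n.choose k * (m + k) (m + k + 1) ⋯ (m + n - 1)`; the usual unsigned
Lah numbers are the case `m = 0`. Up to sign these are the coefficients of the `n`-th derivative of
`x ↦ x⁻¹ ^ m • g x⁻¹`. -/
def lahNumber (m n k : ℕ) : ℕ :=
  n.choose k * (m + k).ascFactorial (n - k)

theorem lahNumber_eq_zero_of_lt (m : ℕ) {n k : ℕ} (h : n < k) : lahNumber m n k = 0 := by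
  rw [lahNumber, Nat.choose_eq_zero_of_lt h, zero_mul]

theorem lahNumber_succ_zero (m n : ℕ) :
    lahNumber m (n + 1) 0 = (m + n) * lahNumber m n 0 := by
  simp [lahNumber, Nat.ascFactorial_succ]

theorem lahNumber_succ_succ (m n k : ℕ) :
    lahNumber m (n + 1) (k + 1) =
      (m + n + (k + 1)) * lahNumber m n (k + 1) + lahNumber m n k := by
  rcases lt_trichotomy n k with h | rfl | h
  · simp only [lahNumber_eq_zero_of_lt m, h, Nat.succ_lt_succ h, h.trans k.lt_succ_self, mul_zero,
      add_zero]
  · rw [lahNumber_eq_zero_of_lt m n.lt_succ_self]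
    simp [lahNumber]
  · obtain ⟨d, rfl⟩ := Nat.exists_eq_add_of_lt h
    have hchoose : (k + d + 1).choose (k + 1) * (k + 1) = (k + d + 1).choose k * (d + 1) := by
      rw [Nat.choose_succ_right_eq, show k + d + 1 - k = d + 1 by lia]
    have hasc := Nat.succ_ascFactorial (m + k) d
    rw [lahNumber, lahNumber, lahNumber, Nat.choose_succ_succ,
      show k + d + 1 + 1 - (k + 1) = d + 1 by lia, show k + d + 1 - (k + 1) = d by lia,
      show k + d + 1 - k = d + 1 by lia, Nat.ascFactorial_succ, Nat.ascFactorial_succ, ← hasc,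
      Nat.succ_eq_add_one, ← add_assoc m k 1]
    linear_combination (m + k + 1).ascFactorial d * hchoose.symm

theorem sum_lahNumber_succ_smul {M : Type*} [AddCommMonoid M] (m n : ℕ) (a : ℕ → M) :
    ∑ k ∈ Finset.range (n + 2), lahNumber m (n + 1) k • a k =
      ∑ k ∈ Finset.range (n + 1), lahNumber m n k • ((m + n + k) • a k + a (k + 1)) := by
  have hshift : ∑ k ∈ Finset.range (n + 1), ((m + n + k) * lahNumber m n k) • a k =
      ∑ k ∈ Finset.range (n + 1), ((m + n + (k + 1)) * lahNumber m n (k + 1)) • a (k + 1) +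
        ((m + n) * lahNumber m n 0) • a 0 := by
    have h := Finset.sum_range_succ' (fun k ↦ ((m + n + k) * lahNumber m n k) • a k) (n + 1)
    rwa [Finset.sum_range_succ, lahNumber_eq_zero_of_lt m n.lt_succ_self, mul_zero, zero_smul,
      add_zero] at h
  simp only [Finset.sum_range_succ' _ (n + 1), lahNumber_succ_succ, lahNumber_succ_zero,
    add_smul (_ * _), smul_add, smul_smul, mul_comm (lahNumber m n _), Finset.sum_add_distrib,
    hshift]
  exact add_right_comm _ _ _

end LahNumbers

section InversionDerivatives

variable {𝕜 E : Type*} [NontriviallyNormedField 𝕜] [NormedAddCommGroup E] [NormedSpace 𝕜 E]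
  {g : 𝕜 → E} {x : 𝕜}

theorem hasDerivAt_inv_pow_smul_comp_inv {g' : E} (m : ℕ) (hx : x ≠ 0)
    (hg : HasDerivAt g g' x⁻¹) :
    HasDerivAt (fun y ↦ y⁻¹ ^ m • g y⁻¹)
      (-(m • x⁻¹ ^ (m + 1) • g x⁻¹ + x⁻¹ ^ (m + 2) • g')) x := by
  have hpow : HasDerivAt (fun y : 𝕜 ↦ y⁻¹ ^ m) (-(m * x⁻¹ ^ (m + 1))) x := by
    refine ((hasDerivAt_inv hx).fun_pow m).congr_deriv ?_
    rcases m with _ | m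
    · simp
    · simp only [Nat.add_sub_cancel, ← inv_pow]
      ring
  refine (hpow.smul (hg.scomp x (hasDerivAt_inv hx))).congr_deriv ?_
  simp only [Function.comp_apply, ← Nat.cast_smul_eq_nsmul 𝕜, ← inv_pow]
  module

theorem hasDerivAt_iteratedDeriv {k : ℕ} (hg : ContDiffAt 𝕜 (k + 1) g x) :
    HasDerivAt (iteratedDeriv k g) (iteratedDeriv (k + 1) g x) x := by
  have hk : DifferentiableAt 𝕜 (iteratedDeriv k g) x := by
    simpa only [iteratedDerivWithin_univ, differentiableWithinAt_univ] using
      (contDiffWithinAt_univ.2 hg).differentiableWithinAt_iteratedDerivWithin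
        (by exact_mod_cast k.lt_succ_self) (by simp)
  rw [iteratedDeriv_succ]
  exact hk.hasDerivAt

theorem iteratedDeriv_inv_pow_smul_comp_inv (m n : ℕ) (hx : x ≠ 0)
    (hg : ContDiffAt 𝕜 n g x⁻¹) :
    iteratedDeriv n (fun y ↦ y⁻¹ ^ m • g y⁻¹) x =
      (-1 : 𝕜) ^ n • ∑ k ∈ Finset.range (n + 1),
        lahNumber m n k • x⁻¹ ^ (m + n + k) • iteratedDeriv k g x⁻¹ := by
  induction n generalizing x with
  | zero => simp [lahNumber]
  | succ n ih =>
    have hev : iteratedDeriv n (fun y ↦ y⁻¹ ^ m • g y⁻¹) =ᶠ[nhds x] fun y ↦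
        (-1 : 𝕜) ^ n • ∑ k ∈ Finset.range (n + 1),
          lahNumber m n k • y⁻¹ ^ (m + n + k) • iteratedDeriv k g y⁻¹ := by
      have hgn : ContDiffAt 𝕜 n g x⁻¹ := hg.of_le (by exact_mod_cast n.le_succ)
      filter_upwards [eventually_ne_nhds hx,
        (continuousAt_inv₀ hx).eventually (hgn.eventually (by simp))] with y hy hgy
      exact ih hy hgy
    have hterm (k : ℕ) (hk : k ∈ Finset.range (n + 1)) :
        HasDerivAt (fun y ↦ lahNumber m n k • y⁻¹ ^ (m + n + k) • iteratedDeriv k g y⁻¹)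
          (lahNumber m n k • -((m + n + k) • x⁻¹ ^ (m + n + k + 1) • iteratedDeriv k g x⁻¹ +
            x⁻¹ ^ (m + n + k + 2) • iteratedDeriv (k + 1) g x⁻¹)) x := by
      have hd := hasDerivAt_iteratedDeriv
        (hg.of_le (by exact_mod_cast (Finset.mem_range.1 hk : k + 1 ≤ n + 1)))
      simpa only [Nat.cast_smul_eq_nsmul] using
        (hasDerivAt_inv_pow_smul_comp_inv (m + n + k) hx hd).fun_const_smul (lahNumber m n k : 𝕜)
    have hsum : HasDerivAt (iteratedDeriv n fun y ↦ y⁻¹ ^ m • g y⁻¹) _ x :=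
      ((HasDerivAt.fun_sum hterm).const_smul ((-1 : 𝕜) ^ n)).congr_of_eventuallyEq hev
    rw [iteratedDeriv_succ, hsum.deriv, sum_lahNumber_succ_smul, pow_succ, mul_smul]
    simp only [smul_neg, Finset.sum_neg_distrib, neg_smul, one_smul]
    ring_nf

end InversionDerivatives

section JacobiTheta

open Complex

theorem analyticAt_jacobiTheta₂_comp {z τ : ℂ → ℂ} {ν : ℂ} (hz : AnalyticAt ℂ z ν)
    (hτ : AnalyticAt ℂ τ ν) (him : 0 < (τ ν).im) :
    AnalyticAt ℂ (fun w ↦ jacobiTheta₂ (z w) (τ w)) ν := by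
  rw [analyticAt_iff_eventually_differentiableAt]
  have him' : ∀ᶠ w in nhds ν, 0 < (τ w).im :=
    (continuous_im.continuousAt.comp hτ.continuousAt).eventually_const_lt him
  filter_upwards [hz.eventually_analyticAt, hτ.eventually_analyticAt, him'] with w hzw hτw hw
  exact (hasFDerivAt_jacobiTheta₂ (z w) hw).differentiableAt.comp w
    (hzw.differentiableAt.prodMk hτw.differentiableAt)

theorem analyticAt_jacobiTheta₂'_comp {z τ : ℂ → ℂ} {ν : ℂ} (hz : AnalyticAt ℂ z ν)
    (hτ : AnalyticAt ℂ τ ν) (him : 0 < (τ ν).im) :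
    AnalyticAt ℂ (fun w ↦ jacobiTheta₂' (z w) (τ w)) ν := by
  obtain ⟨T, hT, hTτ⟩ := exists_between him
  obtain ⟨S, hS⟩ := exists_gt |(z ν).im|
  have hTev : ∀ᶠ w in nhds ν, T < (τ w).im :=
    (continuous_im.continuousAt.comp hτ.continuousAt).eventually_const_lt hTτ
  have hSev : ∀ᶠ w in nhds ν, |(z w).im| < S :=
    (continuous_im.continuousAt.comp hz.continuousAt).abs.eventually_lt_const hS
  obtain ⟨U, hU, hUo, hνU⟩ := eventually_nhds_iff.1
    ((hz.eventually_analyticAt.and hτ.eventually_analyticAt).and (hTev.and hSev))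
  have hterm (n : ℤ) : DifferentiableOn ℂ (fun w ↦ jacobiTheta₂'_term n (z w) (τ w)) U := by
    intro w hw
    have hzw := (hU w hw).1.1.differentiableAt
    have hτw := (hU w hw).1.2.differentiableAt
    unfold jacobiTheta₂'_term jacobiTheta₂_term
    exact DifferentiableAt.differentiableWithinAt (by fun_prop)
  have hbound (n : ℤ) (w : ℂ) (hw : w ∈ U) : ‖jacobiTheta₂'_term n (z w) (τ w)‖ ≤
      2 * Real.pi * (|n| ^ 1 * Real.exp (-Real.pi * (T * n ^ 2 - 2 * S * |n|))) := by
    rw [pow_one, ← mul_assoc]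
    exact norm_jacobiTheta₂'_term_le hT (hU w hw).2.2.le (hU w hw).2.1.le n
  exact (differentiableOn_tsum_of_summable_norm
    ((summable_pow_mul_jacobiTheta₂_term_bound S hT 1).mul_left _) hterm hUo hbound).analyticAt
    (hUo.mem_nhds hνU)

end JacobiTheta

section ThetaWithCharacteristics

open Complex

variable (p q : ℂ) {ν : ℂ}

theorem inv_re_pos (hν : 0 < ν.re) : 0 < ν⁻¹.re := by
  rw [inv_re]
  exact div_pos hν (normSq_pos.2 (ne_zero_of_re_pos hν))

theorem cexp_theta_summand_eq (m : ℤ) (ν : ℂ) :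
    cexp (-Real.pi * (m + p) ^ 2 * ν + 2 * Real.pi * I * (m + p) * q) =
      cexp (-Real.pi * p ^ 2 * ν + 2 * Real.pi * I * p * q) *
        jacobiTheta₂_term m (q + I * p * ν) (I * ν) := by
  rw [jacobiTheta₂_term, ← Complex.exp_add]
  congr 1
  linear_combination (-2 * Real.pi * m * p * ν - Real.pi * m ^ 2 * ν) * I_sq

theorem theta_eq_cexp_mul_jacobiTheta₂ (ν : ℂ) :
    theta p q ν = cexp (-Real.pi * p ^ 2 * ν + 2 * Real.pi * I * p * q) *
      jacobiTheta₂ (q + I * p * ν) (I * ν) := by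
  simp only [theta, jacobiTheta₂, cexp_theta_summand_eq, tsum_mul_left]

theorem thetaQ_eq_cexp_mul_jacobiTheta₂' (hν : 0 < ν.re) :
    thetaQ p q ν = cexp (-Real.pi * p ^ 2 * ν + 2 * Real.pi * I * p * q) *
      (jacobiTheta₂' (q + I * p * ν) (I * ν) +
        2 * Real.pi * I * p * jacobiTheta₂ (q + I * p * ν) (I * ν)) := by
  have him : 0 < (I * ν).im := by rwa [I_mul_im]
  have hsum := (hasSum_jacobiTheta₂'_term (q + I * p * ν) him).add
    ((hasSum_jacobiTheta₂_term (q + I * p * ν) him).mul_left (2 * Real.pi * I * p))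
  rw [thetaQ, ← hsum.tsum_eq, ← tsum_mul_left, ← tsum_mul_left]
  refine tsum_congr fun m ↦ ?_
  rw [cexp_theta_summand_eq, jacobiTheta₂'_term]
  ring

theorem theta_add_one_left (ν : ℂ) : theta (p + 1) q ν = theta p q ν := by
  rw [theta, theta, ← (Equiv.addRight (1 : ℤ)).tsum_eq fun m : ℤ ↦
    cexp (-Real.pi * (m + p) ^ 2 * ν + 2 * Real.pi * I * (m + p) * q)]
  simp only [Equiv.coe_addRight, Int.cast_add, Int.cast_one, add_assoc, add_comm p]

theorem thetaQ_add_one_left (ν : ℂ) : thetaQ (p + 1) q ν = thetaQ p q ν := by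
  rw [thetaQ, thetaQ, ← (Equiv.addRight (1 : ℤ)).tsum_eq fun m : ℤ ↦
    (m + p) * cexp (-Real.pi * (m + p) ^ 2 * ν + 2 * Real.pi * I * (m + p) * q)]
  simp only [Equiv.coe_addRight, Int.cast_add, Int.cast_one, add_assoc, add_comm p]

theorem analyticAt_theta (hν : 0 < ν.re) : AnalyticAt ℂ (theta p q) ν := by
  have him : 0 < (I * ν).im := by rwa [I_mul_im]
  rw [funext (theta_eq_cexp_mul_jacobiTheta₂ p q)]
  exact AnalyticAt.fun_mul (by fun_prop)
    (analyticAt_jacobiTheta₂_comp (by fun_prop) (by fun_prop) him)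

theorem analyticAt_thetaQ (hν : 0 < ν.re) : AnalyticAt ℂ (thetaQ p q) ν := by
  have him : 0 < (I * ν).im := by rwa [I_mul_im]
  have hJ := analyticAt_jacobiTheta₂_comp (z := fun w ↦ q + I * p * w) (τ := fun w ↦ I * w)
    (by fun_prop) (by fun_prop) him
  have hJ' := analyticAt_jacobiTheta₂'_comp (z := fun w ↦ q + I * p * w) (τ := fun w ↦ I * w)
    (by fun_prop) (by fun_prop) him
  have hexp : AnalyticAt ℂ
      (fun w ↦ cexp (-Real.pi * p ^ 2 * w + 2 * Real.pi * I * p * q)) ν := by fun_prop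
  have hpJ := (analyticAt_const (v := 2 * Real.pi * I * p)).fun_mul hJ
  refine (hexp.fun_mul (hJ'.fun_add hpJ)).congr ?_
  filter_upwards [(isOpen_re_gt 0).mem_nhds hν] with w hw
  exact (thetaQ_eq_cexp_mul_jacobiTheta₂' p q hw).symm

theorem cexp_mul_cexp_theta_inversion (hν : ν ≠ 0) :
    cexp (-Real.pi * p ^ 2 * ν + 2 * Real.pi * I * p * q) *
        cexp (-Real.pi * I * (q + I * p * ν) ^ 2 / (I * ν)) =
      cexp (2 * Real.pi * I * p * q) *
        cexp (-Real.pi * (-q) ^ 2 * ν⁻¹ + 2 * Real.pi * I * -q * p) := by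
  rw [← Complex.exp_add, ← Complex.exp_add]
  congr 1
  field_simp
  linear_combination (-p ^ 2 * ν ^ 2) * I_sq

theorem add_I_mul_div_I_mul (hν : ν ≠ 0) :
    (q + I * p * ν) / (I * ν) = p + I * -q * ν⁻¹ := by
  field_simp
  linear_combination q * I_sq

theorem neg_one_div_I_mul (hν : ν ≠ 0) : -1 / (I * ν) = I * ν⁻¹ := by
  field_simp
  linear_combination -I_sq

theorem theta_eq_mul_theta_inv (hν : ν ≠ 0) :
    theta p q ν =
      1 / ν ^ (1 / 2 : ℂ) * cexp (2 * Real.pi * I * p * q) * theta (-q) p ν⁻¹ := by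
  have hτ : -I * (I * ν) = ν := by linear_combination -ν * I_sq
  rw [theta_eq_cexp_mul_jacobiTheta₂, theta_eq_cexp_mul_jacobiTheta₂ (-q),
    jacobiTheta₂_functional_equation, hτ, add_I_mul_div_I_mul p q hν, neg_one_div_I_mul hν]
  linear_combination 1 / ν ^ (1 / 2 : ℂ) * jacobiTheta₂ (p + I * -q * ν⁻¹) (I * ν⁻¹) *
    cexp_mul_cexp_theta_inversion p q hν

theorem thetaQ_eq_mul_thetaQ_inv (hν : 0 < ν.re) :
    thetaQ p q ν = 1 / ν ^ (1 / 2 : ℂ) * (-I * ν⁻¹) * cexp (2 * Real.pi * I * p * q) *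
      thetaQ (-q) p ν⁻¹ := by
  have hν0 : ν ≠ 0 := ne_zero_of_re_pos hν
  have hτ : -I * (I * ν) = ν := by linear_combination -ν * I_sq
  rw [thetaQ_eq_cexp_mul_jacobiTheta₂' p q hν,
    thetaQ_eq_cexp_mul_jacobiTheta₂' (-q) p (inv_re_pos hν), jacobiTheta₂_functional_equation,
    jacobiTheta₂'_functional_equation, hτ, add_I_mul_div_I_mul p q hν0, neg_one_div_I_mul hν0]
  generalize jacobiTheta₂ (p + I * -q * ν⁻¹) (I * ν⁻¹) = J
  generalize jacobiTheta₂' (p + I * -q * ν⁻¹) (I * ν⁻¹) = J'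
  -- the extra term in the functional equation of `jacobiTheta₂'` turns characteristic `p` to `-q`
  have hbracket :
      (J' - 2 * Real.pi * I * (q + I * p * ν) * J) / (I * ν) + 2 * Real.pi * I * p * J =
        -I * ν⁻¹ * (J' + 2 * Real.pi * I * -q * J) := by
    field_simp
    linear_combination (J' - 2 * Real.pi * I * q * J) * I_sq
  linear_combination (1 / ν ^ (1 / 2 : ℂ) * (-I * ν⁻¹ * (J' + 2 * Real.pi * I * -q * J))) *
      cexp_mul_cexp_theta_inversion p q hν0 +
    (1 / ν ^ (1 / 2 : ℂ) * cexp (-Real.pi * p ^ 2 * ν + 2 * Real.pi * I * p * q) *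
      cexp (-Real.pi * I * (q + I * p * ν) ^ 2 / (I * ν))) * hbracket

end ThetaWithCharacteristics

section W2

open Complex

variable (p q : ℂ) {ν : ℂ}

theorem analyticAt_w2 (hν : 0 < ν.re) (hθ : theta p q ν ≠ 0) : AnalyticAt ℂ (w2 p q) ν :=
  (((analyticAt_const.fun_mul (analyticAt_theta _ _ hν)).fun_mul
    (analyticAt_theta _ _ hν)).fun_mul (analyticAt_thetaQ _ _ hν)).fun_div
    (analyticAt_const.fun_mul (analyticAt_theta p q hν)) (mul_ne_zero (Complex.exp_ne_zero _) hθ)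

theorem cexp_two_pi_I_mul_add_half_mul_add_half :
    cexp (2 * Real.pi * I * (p + 1 / 2) * (q + 1 / 2)) =
      I * cexp (2 * Real.pi * I * p * q) * cexp (Real.pi * I * p) * cexp (Real.pi * I * q) := by
  nth_rw 2 [← exp_pi_div_two_mul_I]
  simp only [← Complex.exp_add]
  congr 1
  ring

theorem w2_eq_inv_sq_mul_w2_inv (hν : 0 < ν.re) : w2 p q ν = ν⁻¹ ^ 2 * w2 (-q) p ν⁻¹ := by
  have hν0 : ν ≠ 0 := ne_zero_of_re_pos hν
  have hθ₂ : theta (1 / 2) 0 ν = 1 / ν ^ (1 / 2 : ℂ) * theta 0 (1 / 2) ν⁻¹ := by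
    simpa using theta_eq_mul_theta_inv (1 / 2) 0 hν0
  have hθ₄ : theta 0 (1 / 2) ν = 1 / ν ^ (1 / 2 : ℂ) * theta (1 / 2) 0 ν⁻¹ := by
    have h := theta_eq_mul_theta_inv 0 (1 / 2) hν0
    rw [← theta_add_one_left (-(1 / 2)), show -(1 / 2) + 1 = (1 / 2 : ℂ) by norm_num] at h
    simpa using h
  have hθQ := thetaQ_eq_mul_thetaQ_inv (p + 1 / 2) (q + 1 / 2) hν
  rw [← thetaQ_add_one_left (-(q + 1 / 2)), show -(q + 1 / 2) + 1 = -q + 1 / 2 by ring,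
    cexp_two_pi_I_mul_add_half_mul_add_half] at hθQ
  rw [w2, w2, hθ₂, hθ₄, hθQ, theta_eq_mul_theta_inv p q hν0, mul_neg, Complex.exp_neg]
  by_cases hθ : theta (-q) p ν⁻¹ = 0
  · simp only [hθ, mul_zero, div_zero]
  have hs0 : ν ^ (1 / 2 : ℂ) ≠ 0 := by simp [hν0]
  have hs : ν ^ (1 / 2 : ℂ) * ν ^ (1 / 2 : ℂ) = ν := by
    rw [← Complex.cpow_add _ _ hν0]
    norm_num
  generalize ν ^ (1 / 2 : ℂ) = s at hs0 hs ⊢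
  generalize theta (-q) p ν⁻¹ = t at hθ ⊢
  generalize theta 0 (1 / 2) ν⁻¹ = t₄, theta (1 / 2) 0 ν⁻¹ = t₂,
    thetaQ (-q + 1 / 2) (p + 1 / 2) ν⁻¹ = Q
  subst hs
  field_simp
  linear_combination -(t₂ * t₄ * Q) * I_sq

end W2

theorem statement7_general (p q μ : ℂ) (hμ : 0 < μ.re) (hθ : theta p q (1 / μ) ≠ 0) (n : ℕ) :
    iteratedDeriv n (w2 p q) (1 / μ) =
      (-1) ^ n * ∑ k ∈ Finset.range (n + 1),
        lahNumber 2 n k * μ ^ (2 + n + k) * iteratedDeriv k (w2 (-q) p) μ := by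
  have hμ0 : μ ≠ 0 := Complex.ne_zero_of_re_pos hμ
  rw [one_div] at hθ ⊢
  have hw : w2 p q =ᶠ[nhds μ⁻¹] fun y ↦ y⁻¹ ^ 2 • w2 (-q) p y⁻¹ := by
    filter_upwards [(Complex.isOpen_re_gt 0).mem_nhds (inv_re_pos hμ)] with y hy
    exact w2_eq_inv_sq_mul_w2_inv p q hy
  have hθ' : theta (-q) p μ ≠ 0 := by
    rw [theta_eq_mul_theta_inv p q (inv_ne_zero hμ0), inv_inv] at hθ
    exact right_ne_zero_of_mul hθ
  have hcd : ContDiffAt ℂ n (w2 (-q) p) μ⁻¹⁻¹ := by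
    rw [inv_inv]
    exact (analyticAt_w2 (-q) p hμ hθ').contDiffAt
  rw [hw.iteratedDeriv_eq, iteratedDeriv_inv_pow_smul_comp_inv 2 n (inv_ne_zero hμ0) hcd, inv_inv]
  simp only [smul_eq_mul, nsmul_eq_mul, mul_assoc]

/-- Lemma 5.7: behavior of `w₂[p,q]` and its μ-derivatives up to order 4 under
`iμ ↦ i/μ`, expressed through `w₂[−q,p]`. -/
theorem statement7 (p q μ : ℂ) (hμ : 0 < μ.re)
    (hθ : ∀ ν : ℂ, 0 < ν.re → theta p q ν ≠ 0) :
    w2 p q (1 / μ) = μ ^ 2 * w2 (-q) p μ ∧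
    iteratedDeriv 1 (w2 p q) (1 / μ) =
        -μ ^ 4 * iteratedDeriv 1 (w2 (-q) p) μ - 2 * μ ^ 3 * w2 (-q) p μ ∧
    iteratedDeriv 2 (w2 p q) (1 / μ) =
        μ ^ 6 * iteratedDeriv 2 (w2 (-q) p) μ + 6 * μ ^ 5 * iteratedDeriv 1 (w2 (-q) p) μ +
          6 * μ ^ 4 * w2 (-q) p μ ∧
    iteratedDeriv 3 (w2 p q) (1 / μ) =
        -μ ^ 8 * iteratedDeriv 3 (w2 (-q) p) μ - 12 * μ ^ 7 * iteratedDeriv 2 (w2 (-q) p) μ -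
          36 * μ ^ 6 * iteratedDeriv 1 (w2 (-q) p) μ - 24 * μ ^ 5 * w2 (-q) p μ ∧
    iteratedDeriv 4 (w2 p q) (1 / μ) =
        μ ^ 10 * iteratedDeriv 4 (w2 (-q) p) μ + 20 * μ ^ 9 * iteratedDeriv 3 (w2 (-q) p) μ +
          120 * μ ^ 8 * iteratedDeriv 2 (w2 (-q) p) μ +
          240 * μ ^ 7 * iteratedDeriv 1 (w2 (-q) p) μ + 120 * μ ^ 6 * w2 (-q) p μ := by
  have h := statement7_general p q μ hμ (hθ _ (one_div μ ▸ inv_re_pos hμ))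
  refine ⟨by simpa [lahNumber] using h 0, ?_, ?_, ?_, ?_⟩ <;> rw [h] <;>
    simp only [Finset.sum_range_succ, Finset.sum_range_zero, lahNumber, Nat.choose,
      Nat.ascFactorial, iteratedDeriv_zero] <;> push_cast <;> ring

end
end
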